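/- arXiv:1702.04917 — 6 statements merged into one kernel-verified Lean document; each statement's English description precedes it below -/
import Mathlib

section
/- Let H and F be Hilbert spaces, let Σ ⊆ H be a union of linear subspaces, and let f : H → [0,+∞] be a regularizer with δ_Σ(f) > 0. Then for every δ < δ_Σ(f) there exists a finite constant C = C_Σ(f,δ) (depending only on Σ, f and δ, not on A) such that: for every continuous linear operator A : H → F satisfying the RIP on Σ−Σ with constant δ, every ε ≥ 0, every x ∈ Σ and every e ∈ F with ‖e‖_F ≤ ε, every minimizer x* of f(z) over z ∈ H subject to ‖Az − (Ax+e)‖_F ≤ ε satisfies ‖x* − x‖_H ≤ C·(‖e‖_F + ε). -/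
noncomputable section
open scoped ENNReal NNReal Pointwise RealInnerProductSpace
open Filter Set Classical MeasureTheory ProbabilityTheory

/-- The secant set `Σ - Σ` of a model set. -/
def secantSet {H : Type*} [NormedAddCommGroup H] (S : Set H) : Set H :=
  {u | ∃ x ∈ S, ∃ y ∈ S, u = x - y}

/-- The normalized secant set of a model set. -/
def normSecant {H : Type*} [NormedAddCommGroup H] [NormedSpace ℝ H] (S : Set H) : Set H :=
  {z | ∃ y ∈ secantSet S, y ≠ 0 ∧ z = ‖y‖⁻¹ • y}

/-- The restricted isometry property of `A` on the secant set `Σ - Σ`, with constant `δ`. -/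
def SatisfiesRIP {𝕜 : Type*} [RCLike 𝕜] {H F : Type*} [NormedAddCommGroup H]
    [NormedSpace 𝕜 H] [NormedAddCommGroup F] [NormedSpace 𝕜 F]
    (A : H →L[𝕜] F) (S : Set H) (δ : ℝ) : Prop :=
  ∀ x ∈ secantSet S, (1 - δ) * ‖x‖ ^ 2 ≤ ‖A x‖ ^ 2 ∧ ‖A x‖ ^ 2 ≤ (1 + δ) * ‖x‖ ^ 2

/-- The atomic "norm" induced by a set of atoms `A`: `‖x‖_A = inf {t ≥ 0 : x ∈ t·cl(conv A)}`,
with value `+∞` when no such `t` exists. -/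
def atomicNorm {H : Type*} [NormedAddCommGroup H] [NormedSpace ℝ H] (A : Set H) (x : H) :
    ℝ≥0∞ :=
  sInf {t : ℝ≥0∞ | ∃ r : ℝ, 0 ≤ r ∧ t = ENNReal.ofReal r ∧ x ∈ r • closure (convexHull ℝ A)}

/-- `‖·‖_Σ`, the atomic norm whose atoms are the unit-norm elements of `S`. -/
def sigmaNorm {H : Type*} [NormedAddCommGroup H] [NormedSpace ℝ H] (S : Set H) : H → ℝ≥0∞ :=
  atomicNorm (S ∩ {u : H | ‖u‖ = 1})

/-- `δ_Σ(x,z)`, with the convention that it is `0` when `‖x+z‖_Σ = +∞`. -/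
def deltaXZ (𝕜 : Type*) [RCLike 𝕜] {H : Type*} [NormedAddCommGroup H]
    [InnerProductSpace 𝕜 H] [NormedSpace ℝ H] (S : Set H) (x z : H) : ℝ :=
  if sigmaNorm S (x + z) = ⊤ then 0
  else (-(RCLike.re (inner 𝕜 x z : 𝕜))) /
    (‖x‖ * Real.sqrt ((sigmaNorm S (x + z)).toReal ^ 2 - ‖x‖ ^ 2
      - 2 * RCLike.re (inner 𝕜 x z : 𝕜)))

/-- The set of descent vectors of `f` at points of `S`. -/
def descentSet {H : Type*} [NormedAddCommGroup H] (S : Set H) (f : H → ℝ≥0∞) : Set H :=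
  {z | ∃ x ∈ S, f (x + z) ≤ f x}

/-- The admissibility condition on `x` in the supremum defining `δ_Σ(f)`:
`x ∈ Σ`, `x ≠ 0` and `‖x+z‖_Σ² - ‖x‖² - 2 Re⟪x,z⟫ > 0` (satisfied in particular
when `‖x+z‖_Σ = +∞`). -/
def deltaAdmissible (𝕜 : Type*) [RCLike 𝕜] {H : Type*} [NormedAddCommGroup H]
    [InnerProductSpace 𝕜 H] [NormedSpace ℝ H] (S : Set H) (z x : H) : Prop :=
  x ∈ S ∧ x ≠ 0 ∧
    (sigmaNorm S (x + z) = ⊤ ∨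
      0 < (sigmaNorm S (x + z)).toReal ^ 2 - ‖x‖ ^ 2 - 2 * RCLike.re (inner 𝕜 x z : 𝕜))

/-- The RIP constant `δ_Σ(f) = inf_{z ∈ T_f(Σ), z ≠ 0} sup_x δ_Σ(x,z)`. -/
def deltaSigma (𝕜 : Type*) [RCLike 𝕜] {H : Type*} [NormedAddCommGroup H]
    [InnerProductSpace 𝕜 H] [NormedSpace ℝ H] (S : Set H) (f : H → ℝ≥0∞) : ℝ :=
  sInf {d : ℝ | ∃ z ∈ descentSet S f, z ≠ 0 ∧
    d = sSup {c : ℝ | ∃ x : H, deltaAdmissible 𝕜 S z x ∧ c = deltaXZ 𝕜 S x z}}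

/-- `S` is a union of linear subspaces. -/
def IsUnionOfSubspaces (𝕜 : Type*) [RCLike 𝕜] {H : Type*} [NormedAddCommGroup H]
    [InnerProductSpace 𝕜 H] (S : Set H) : Prop :=
  ∃ 𝒮 : Set (Submodule 𝕜 H), S = ⋃ W ∈ 𝒮, (W : Set H)

/-!
By polarization, the RIP bounds the defect `Re⟪A x, A v⟫ - Re⟪x, v⟫` by
`δ / 2 * (c² ‖x‖² + ‖v‖²) / c` whenever `c x ± v` are secants, in particular for `v = u - x` with
`x, u ∈ Σ`. For `u` on a fixed sphere this inequality is affine in `u`, so it extends to the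
closed convex hull of the atoms with `‖u‖` replaced by `‖u‖_Σ`; optimizing over `c` bounds the
defect by `δ` times the denominator of `δ_Σ(x, z)`. Cauchy–Schwarz for `⟪A x, A z⟫` then gives
`δ_Σ(x, z) ≤ δ + √(1 + δ) ‖A z‖ / ‖z‖`. Taking the supremum over `x`, every descent vector `z`
satisfies `(δ_Σ(f) - δ) ‖z‖ ≤ √(1 + δ) ‖A z‖`, which is applied to `z = x* - x`.
-/

theorem smul_closure_convexHull_subset {E : Type*} [AddCommGroup E] [Module ℝ E]
    [TopologicalSpace E] [ContinuousConstSMul ℝ E] {A K : Set E} (hK : IsClosed K)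
    (hKc : Convex ℝ K) {r : ℝ} (hr : ∀ a ∈ A, r • a ∈ K) :
    r • closure (convexHull ℝ A) ⊆ K := by
  rintro _ ⟨w, hw, rfl⟩
  have hpre : closure (convexHull ℝ A) ⊆ (r • ·) ⁻¹' K :=
    closure_minimal (convexHull_min hr (hKc.smul_preimage r))
      (hK.preimage (continuous_const_smul r))
  exact hpre hw

section HalfSpace

variable {𝕜 : Type*} [RCLike 𝕜] {E : Type*} [AddCommGroup E] [Module 𝕜 E] [TopologicalSpace E]

theorem isClosed_setOf_re_le (ℓ : E →L[𝕜] 𝕜) (M : ℝ) : IsClosed {y : E | RCLike.re (ℓ y) ≤ M} :=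
  isClosed_le (RCLike.continuous_re.comp ℓ.continuous) continuous_const

theorem convex_setOf_re_le [Module ℝ E] [IsScalarTower ℝ 𝕜 E] (ℓ : E →L[𝕜] 𝕜) (M : ℝ) :
    Convex ℝ {y : E | RCLike.re (ℓ y) ≤ M} :=
  convex_halfSpace_le (RCLike.reLm ∘ₗ (ℓ : E →ₗ[𝕜] 𝕜).restrictScalars ℝ).isLinear M

end HalfSpace

section AtomicNorm

variable {H : Type*} [NormedAddCommGroup H] [NormedSpace ℝ H] {A S : Set H} {y : H}

theorem toReal_atomicNorm (A : Set H) (y : H) :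
    (atomicNorm A y).toReal = sInf {r : ℝ | 0 ≤ r ∧ y ∈ r • closure (convexHull ℝ A)} := by
  rw [atomicNorm, ENNReal.toReal_sInf]
  · congr 1
    ext r
    constructor
    · rintro ⟨_, ⟨t, ht, rfl, hy⟩, rfl⟩
      rw [ENNReal.toReal_ofReal ht]
      exact ⟨ht, hy⟩
    · rintro ⟨hr, hy⟩
      exact ⟨_, ⟨r, hr, rfl, hy⟩, ENNReal.toReal_ofReal hr⟩
  · rintro _ ⟨r, -, rfl, -⟩
    exact ENNReal.ofReal_ne_top

theorem toReal_atomicNorm_mem_of_isClosed {K : Set ℝ} (hK : IsClosed K)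
    (hy : atomicNorm A y ≠ ⊤)
    (hAK : ∀ r : ℝ, 0 ≤ r → y ∈ r • closure (convexHull ℝ A) → r ∈ K) :
    (atomicNorm A y).toReal ∈ K := by
  obtain ⟨_, ⟨r, hr, -, hyr⟩, -⟩ := sInf_lt_iff.mp hy.lt_top
  rw [toReal_atomicNorm]
  exact closure_minimal (fun t ht => hAK t ht.1 ht.2) hK
    (csInf_mem_closure ⟨r, hr, hyr⟩ ⟨0, fun t ht => ht.1⟩)

theorem norm_le_toReal_atomicNorm (hA : A ⊆ Metric.closedBall 0 1) (hy : atomicNorm A y ≠ ⊤) :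
    ‖y‖ ≤ (atomicNorm A y).toReal := by
  refine toReal_atomicNorm_mem_of_isClosed isClosed_Ici hy fun r hr hyr => ?_
  have hball : r • closure (convexHull ℝ A) ⊆ Metric.closedBall 0 r := by
    refine smul_closure_convexHull_subset Metric.isClosed_closedBall (convex_closedBall 0 r) ?_
    intro a ha
    have ha1 : ‖a‖ ≤ 1 := mem_closedBall_zero_iff.mp (hA ha)
    rw [mem_closedBall_zero_iff, norm_smul, Real.norm_of_nonneg hr]
    exact mul_le_of_le_one_right hr ha1
  exact mem_closedBall_zero_iff.mp (hball hyr)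

theorem norm_le_toReal_sigmaNorm (hy : sigmaNorm S y ≠ ⊤) : ‖y‖ ≤ (sigmaNorm S y).toReal :=
  norm_le_toReal_atomicNorm (fun _ hu => mem_closedBall_zero_iff.mpr (le_of_eq hu.2)) hy

end AtomicNorm

section RIP

variable {𝕜 : Type*} [RCLike 𝕜] {H F : Type*} [NormedAddCommGroup H] [NormedSpace 𝕜 H]
  [NormedAddCommGroup F] [NormedSpace 𝕜 F] {A : H →L[𝕜] F} {S : Set H} {δ δ' : ℝ}

theorem SatisfiesRIP.mono (hA : SatisfiesRIP A S δ) (hδ : δ ≤ δ') : SatisfiesRIP A S δ' := by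
  intro y hy
  obtain ⟨hlower, hupper⟩ := hA y hy
  exact ⟨le_trans (by gcongr) hlower, hupper.trans (by gcongr)⟩

theorem SatisfiesRIP.norm_map_le (hA : SatisfiesRIP A S δ) {y : H} (hy : y ∈ secantSet S) :
    ‖A y‖ ≤ √(1 + δ) * ‖y‖ := by
  calc ‖A y‖ ≤ √((1 + δ) * ‖y‖ ^ 2) := Real.le_sqrt_of_sq_le (hA y hy).2
    _ = √(1 + δ) * ‖y‖ := by rw [Real.sqrt_mul' _ (sq_nonneg _), Real.sqrt_sq (norm_nonneg y)]

end RIP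

section IsometryDefect

variable {𝕜 : Type*} [RCLike 𝕜] {H F : Type*} [NormedAddCommGroup H] [InnerProductSpace 𝕜 H]
  [NormedAddCommGroup F] [InnerProductSpace 𝕜 F] {A : H →L[𝕜] F} {S : Set H} {δ : ℝ} {x : H}

/-- The isometry defect of `A` at `x`, as the functional `v ↦ ⟪A x, A v⟫ - ⟪x, v⟫`. It plays
the role of `A† A - 1`, whose adjoint would require complete spaces. -/
def isometryDefect (A : H →L[𝕜] F) (x : H) : H →L[𝕜] 𝕜 :=
  innerSL 𝕜 (A x) ∘L A - innerSL 𝕜 x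

theorem re_isometryDefect_apply (A : H →L[𝕜] F) (x v : H) :
    RCLike.re (isometryDefect A x v) =
      RCLike.re (inner 𝕜 (A x) (A v)) - RCLike.re (inner 𝕜 x v) := by
  simp [isometryDefect]

theorem neg_re_inner_le_re_isometryDefect_add (A : H →L[𝕜] F) (x z : H) :
    -RCLike.re (inner 𝕜 x z) ≤ RCLike.re (isometryDefect A x z) + ‖A x‖ * ‖A z‖ := by
  have hcs : -RCLike.re (inner 𝕜 (A x) (A z)) ≤ ‖A x‖ * ‖A z‖ := by
    simpa [inner_neg_right] using re_inner_le_norm (𝕜 := 𝕜) (A x) (-A z)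
  rw [re_isometryDefect_apply]
  linarith

theorem SatisfiesRIP.re_isometryDefect_le (hA : SatisfiesRIP A S δ) {v w : H}
    (hadd : v + w ∈ secantSet S) (hsub : v - w ∈ secantSet S) :
    RCLike.re (isometryDefect A v w) ≤ δ / 2 * (‖v‖ ^ 2 + ‖w‖ ^ 2) := by
  have hupper := (hA _ hadd).2
  have hlower := (hA _ hsub).1
  rw [map_add, norm_add_sq (𝕜 := 𝕜), norm_add_sq (𝕜 := 𝕜)] at hupper
  rw [map_sub, norm_sub_sq (𝕜 := 𝕜), norm_sub_sq (𝕜 := 𝕜)] at hlower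
  rw [re_isometryDefect_apply]
  linarith

variable [NormedSpace ℝ H] [IsScalarTower ℝ 𝕜 H]

theorem re_isometryDefect_smul (A : H →L[𝕜] F) (c : ℝ) (x v : H) :
    RCLike.re (isometryDefect A (c • x) v) = c * RCLike.re (isometryDefect A x v) := by
  simp only [re_isometryDefect_apply, RCLike.real_smul_eq_coe_smul (K := 𝕜), map_smul,
    inner_smul_left, RCLike.conj_ofReal, RCLike.re_ofReal_mul, mul_sub]

theorem SatisfiesRIP.mul_re_isometryDefect_sub_le (hA : SatisfiesRIP A S δ)
    (hS : ∀ c : ℝ, ∀ x ∈ S, c • x ∈ S) (hx : x ∈ S) {u : H} (hu : u ∈ S) (c : ℝ) :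
    c * RCLike.re (isometryDefect A x (u - x)) ≤
      δ / 2 * (c ^ 2 * ‖x‖ ^ 2 + ‖u - x‖ ^ 2) := by
  have hadd : c • x + (u - x) ∈ secantSet S :=
    ⟨(c - 1) • x, hS _ x hx, (-1 : ℝ) • u, hS _ u hu, by module⟩
  have hsub : c • x - (u - x) ∈ secantSet S := ⟨(c + 1) • x, hS _ x hx, u, hu, by module⟩
  have hdefect := hA.re_isometryDefect_le hadd hsub
  rwa [re_isometryDefect_smul, norm_smul, mul_pow, Real.norm_eq_abs, sq_abs] at hdefect

-- On the sphere `‖y‖ = r` the right-hand side is `δ / 2 * (c² ‖x‖² + ‖y - x‖²)`, but in this form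
-- the inequality is affine in `y`, so it passes from the atoms to their closed convex hull.
theorem SatisfiesRIP.mul_re_isometryDefect_sub_le_of_mem_hull (hA : SatisfiesRIP A S δ)
    (hS : ∀ c : ℝ, ∀ x ∈ S, c • x ∈ S) (hx : x ∈ S) (c : ℝ) {r : ℝ} {y : H}
    (hy : y ∈ r • closure (convexHull ℝ (S ∩ {u : H | ‖u‖ = 1}))) :
    c * RCLike.re (isometryDefect A x (y - x)) ≤
      δ / 2 * (c ^ 2 * ‖x‖ ^ 2 +
        (r ^ 2 - ‖x‖ ^ 2 - 2 * RCLike.re (inner 𝕜 x (y - x)))) := by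
  let ℓ : H →L[𝕜] 𝕜 := (c : 𝕜) • isometryDefect A x + (δ : 𝕜) • innerSL 𝕜 x
  let M : ℝ := RCLike.re (ℓ x) + δ / 2 * (c ^ 2 * ‖x‖ ^ 2 + (r ^ 2 - ‖x‖ ^ 2))
  have hℓ (y : H) : RCLike.re (ℓ y) =
      c * RCLike.re (isometryDefect A x y) + δ * RCLike.re (inner 𝕜 x y) := by
    simp [ℓ]
  have hiff (y : H) : RCLike.re (ℓ y) ≤ M ↔
      c * RCLike.re (isometryDefect A x (y - x)) ≤ δ / 2 * (c ^ 2 * ‖x‖ ^ 2 +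
        (r ^ 2 - ‖x‖ ^ 2 - 2 * RCLike.re (inner 𝕜 x (y - x)))) := by
    simp only [M, hℓ, map_sub, inner_sub_right]
    constructor <;> intro h <;> linarith
  refine (hiff y).mp <| smul_closure_convexHull_subset (isClosed_setOf_re_le ℓ M)
    (convex_setOf_re_le ℓ M) ?_ hy
  rintro a ⟨haS, ha : ‖a‖ = 1⟩
  have hnorm : ‖r • a - x‖ ^ 2 =
      r ^ 2 - ‖x‖ ^ 2 - 2 * RCLike.re (inner 𝕜 x (r • a - x)) := by
    have hsq := norm_add_sq (𝕜 := 𝕜) x (r • a - x)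
    rw [add_sub_cancel, norm_smul, ha, mul_one, Real.norm_eq_abs, sq_abs] at hsq
    linarith
  exact (hiff _).mpr (hnorm ▸ hA.mul_re_isometryDefect_sub_le hS hx (hS r a haS) c)

end IsometryDefect

section Stability

variable {𝕜 : Type*} [RCLike 𝕜] {H : Type*} [NormedAddCommGroup H] [InnerProductSpace 𝕜 H]
  [NormedSpace ℝ H] {S : Set H} {f : H → ℝ≥0∞} {x z : H}

variable (𝕜 S x z) in
/-- The quantity `‖x + z‖_Σ² - ‖x‖² - 2 Re⟪x, z⟫` under the square root in `δ_Σ(x, z)`: the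
expansion of `‖z‖²` with `‖x + z‖` relaxed to `‖x + z‖_Σ`. Meaningful only for
`‖x + z‖_Σ ≠ ⊤`. -/
def relaxedNormSq : ℝ :=
  (sigmaNorm S (x + z)).toReal ^ 2 - ‖x‖ ^ 2 - 2 * RCLike.re (inner 𝕜 x z)

theorem norm_sq_le_relaxedNormSq (hfin : sigmaNorm S (x + z) ≠ ⊤) :
    ‖z‖ ^ 2 ≤ relaxedNormSq 𝕜 S x z := by
  have hle : ‖x + z‖ ^ 2 ≤ (sigmaNorm S (x + z)).toReal ^ 2 := by
    gcongr
    exact norm_le_toReal_sigmaNorm hfin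
  rw [norm_add_sq (𝕜 := 𝕜)] at hle
  rw [relaxedNormSq]
  linarith

theorem deltaSigma_le_sSup_deltaXZ (hpos : 0 < deltaSigma 𝕜 S f) (hz : z ∈ descentSet S f)
    (hz0 : z ≠ 0) :
    deltaSigma 𝕜 S f ≤ sSup {c : ℝ | ∃ x : H, deltaAdmissible 𝕜 S z x ∧ c = deltaXZ 𝕜 S x z} := by
  refine csInf_le ?_ ⟨z, hz, hz0, rfl⟩
  by_contra hunbdd
  exact hpos.ne' (Real.sInf_of_not_bddBelow hunbdd)

variable [IsScalarTower ℝ 𝕜 H]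

theorem IsUnionOfSubspaces.smul_mem (hS : IsUnionOfSubspaces 𝕜 S) (c : ℝ) (x : H) (hx : x ∈ S) :
    c • x ∈ S := by
  obtain ⟨𝒮, rfl⟩ := hS
  simp only [mem_iUnion] at hx ⊢
  obtain ⟨W, hW, hxW⟩ := hx
  exact ⟨W, hW, W.smul_of_tower_mem c hxW⟩

variable {F : Type*} [NormedAddCommGroup F] [InnerProductSpace 𝕜 F] {A : H →L[𝕜] F} {δ : ℝ}

theorem SatisfiesRIP.mul_re_isometryDefect_le (hA : SatisfiesRIP A S δ)
    (hS : ∀ c : ℝ, ∀ x ∈ S, c • x ∈ S) (hx : x ∈ S) (hfin : sigmaNorm S (x + z) ≠ ⊤) (c : ℝ) :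
    c * RCLike.re (isometryDefect A x z) ≤
      δ / 2 * (c ^ 2 * ‖x‖ ^ 2 + relaxedNormSq 𝕜 S x z) := by
  let bound (r : ℝ) : ℝ :=
    δ / 2 * (c ^ 2 * ‖x‖ ^ 2 + (r ^ 2 - ‖x‖ ^ 2 - 2 * RCLike.re (inner 𝕜 x z)))
  have hclosed : IsClosed {r : ℝ | c * RCLike.re (isometryDefect A x z) ≤ bound r} :=
    isClosed_le continuous_const (by fun_prop)
  refine toReal_atomicNorm_mem_of_isClosed hclosed hfin fun r _ hr => ?_
  simpa only [mem_ofPred_eq, bound, add_sub_cancel_left] using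
    hA.mul_re_isometryDefect_sub_le_of_mem_hull hS hx c hr

theorem SatisfiesRIP.re_isometryDefect_le_mul_sqrt (hA : SatisfiesRIP A S δ)
    (hS : ∀ c : ℝ, ∀ x ∈ S, c • x ∈ S) (hx : x ∈ S) (hx0 : x ≠ 0)
    (hfin : sigmaNorm S (x + z) ≠ ⊤) (hpos : 0 < relaxedNormSq 𝕜 S x z) :
    RCLike.re (isometryDefect A x z) ≤ δ * (‖x‖ * √(relaxedNormSq 𝕜 S x z)) := by
  set s := √(relaxedNormSq 𝕜 S x z)
  have hs : 0 < s := Real.sqrt_pos.mpr hpos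
  have hs2 : s ^ 2 = relaxedNormSq 𝕜 S x z := Real.sq_sqrt hpos.le
  -- `c = s / ‖x‖` balances the two summands: both become `s²`.
  have hdefect := hA.mul_re_isometryDefect_le hS hx hfin (s / ‖x‖)
  rw [← hs2] at hdefect
  have hscaled : s / ‖x‖ * RCLike.re (isometryDefect A x z) ≤ s / ‖x‖ * (δ * (‖x‖ * s)) := by
    refine hdefect.trans_eq ?_
    field_simp
    ring
  exact le_of_mul_le_mul_left hscaled (by positivity)

theorem SatisfiesRIP.deltaXZ_le (hA : SatisfiesRIP A S δ) (hδ : 0 ≤ δ)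
    (hS : ∀ c : ℝ, ∀ x ∈ S, c • x ∈ S) (hz : z ≠ 0) (hx : deltaAdmissible 𝕜 S z x) :
    deltaXZ 𝕜 S x z ≤ δ + √(1 + δ) * ‖A z‖ / ‖z‖ := by
  obtain ⟨hxS, hx0, hadm⟩ := hx
  by_cases hfin : sigmaNorm S (x + z) = ⊤
  · rw [deltaXZ, if_pos hfin]
    positivity
  have hpos : 0 < relaxedNormSq 𝕜 S x z := hadm.resolve_left hfin
  set s := √(relaxedNormSq 𝕜 S x z)
  have hs : 0 < s := Real.sqrt_pos.mpr hpos
  have hzs : ‖z‖ ≤ s := Real.le_sqrt_of_sq_le (norm_sq_le_relaxedNormSq hfin)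
  have hAx : ‖A x‖ ≤ √(1 + δ) * ‖x‖ :=
    hA.norm_map_le ⟨x, hxS, (0 : ℝ) • x, hS 0 x hxS, by simp⟩
  calc deltaXZ 𝕜 S x z = -RCLike.re (inner 𝕜 x z) / (‖x‖ * s) := if_neg hfin
    _ ≤ (δ * (‖x‖ * s) + √(1 + δ) * ‖x‖ * ‖A z‖) / (‖x‖ * s) := by
      gcongr
      exact (neg_re_inner_le_re_isometryDefect_add A x z).trans
        (add_le_add (hA.re_isometryDefect_le_mul_sqrt hS hxS hx0 hfin hpos) (by gcongr))
    _ = δ + √(1 + δ) * ‖A z‖ / s := by field_simp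
    _ ≤ δ + √(1 + δ) * ‖A z‖ / ‖z‖ := by gcongr

theorem SatisfiesRIP.mul_norm_le_of_mem_descentSet (hA : SatisfiesRIP A S δ) (hδ : 0 ≤ δ)
    (hS : ∀ c : ℝ, ∀ x ∈ S, c • x ∈ S) (hpos : 0 < deltaSigma 𝕜 S f)
    (hz : z ∈ descentSet S f) :
    (deltaSigma 𝕜 S f - δ) * ‖z‖ ≤ √(1 + δ) * ‖A z‖ := by
  rcases eq_or_ne z 0 with rfl | hz0
  · simp
  have hle : deltaSigma 𝕜 S f ≤ δ + √(1 + δ) * ‖A z‖ / ‖z‖ := by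
    refine (deltaSigma_le_sSup_deltaXZ hpos hz hz0).trans (Real.sSup_le ?_ (by positivity))
    rintro _ ⟨x, hx, rfl⟩
    exact hA.deltaXZ_le hδ hS hz0 hx
  rwa [← le_div_iff₀ (norm_pos_iff.mpr hz0), sub_le_iff_le_add']

theorem stmt1_general (hS : ∀ c : ℝ, ∀ x ∈ S, c • x ∈ S)
    (hδpos : 0 < deltaSigma 𝕜 S f) (hδ : δ < deltaSigma 𝕜 S f) (hA : SatisfiesRIP A S δ)
    (hx : x ∈ S) {e : F} {ε : ℝ} {xs : H} (hfit : ‖A xs - (A x + e)‖ ≤ ε) (hf : f xs ≤ f x) :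
    ‖xs - x‖ ≤ √(1 + max δ 0) / (deltaSigma 𝕜 S f - max δ 0) * (‖e‖ + ε) := by
  have hgap : 0 < deltaSigma 𝕜 S f - max δ 0 := sub_pos.mpr (max_lt hδ hδpos)
  have hdescent : xs - x ∈ descentSet S f := ⟨x, hx, by rwa [add_sub_cancel]⟩
  have hresidual : ‖A (xs - x)‖ ≤ ‖e‖ + ε :=
    calc ‖A (xs - x)‖ = ‖e + (A xs - (A x + e))‖ := by rw [map_sub]; congr 1; abel
      _ ≤ ‖e‖ + ε := norm_add_le_of_le le_rfl hfit
  rw [div_mul_eq_mul_div, le_div_iff₀' hgap]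
  calc (deltaSigma 𝕜 S f - max δ 0) * ‖xs - x‖ ≤ √(1 + max δ 0) * ‖A (xs - x)‖ :=
        (hA.mono (le_max_left δ 0)).mul_norm_le_of_mem_descentSet (le_max_right δ 0) hS hδpos
          hdescent
    _ ≤ √(1 + max δ 0) * (‖e‖ + ε) := by gcongr

end Stability

/-- under a RIP with constant `δ < δ_Σ(f)`, the decoder minimizing `f` under
the data-fit constraint is stable to noise, with a constant independent of `A`. -/
theorem stmt1 {𝕜 : Type*} [RCLike 𝕜] {H F : Type*}
    [NormedAddCommGroup H] [InnerProductSpace 𝕜 H] [CompleteSpace H]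
    [NormedSpace ℝ H] [IsScalarTower ℝ 𝕜 H]
    [NormedAddCommGroup F] [InnerProductSpace 𝕜 F] [CompleteSpace F]
    (S : Set H) (hS : IsUnionOfSubspaces 𝕜 S) (f : H → ℝ≥0∞)
    (hδpos : 0 < deltaSigma 𝕜 S f) (δ : ℝ) (hδ : δ < deltaSigma 𝕜 S f) :
    ∃ C : ℝ, 0 ≤ C ∧
      ∀ A : H →L[𝕜] F, SatisfiesRIP A S δ →
        ∀ ε : ℝ, 0 ≤ ε → ∀ x ∈ S, ∀ e : F, ‖e‖ ≤ ε → ∀ xs : H,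
          (‖A xs - (A x + e)‖ ≤ ε ∧ ∀ z : H, ‖A z - (A x + e)‖ ≤ ε → f xs ≤ f z) →
          ‖xs - x‖ ≤ C * (‖e‖ + ε) := by
  refine ⟨√(1 + max δ 0) / (deltaSigma 𝕜 S f - max δ 0),
    div_nonneg (Real.sqrt_nonneg _) (sub_pos.mpr (max_lt hδ hδpos)).le, ?_⟩
  rintro A hA ε - x hx e he xs ⟨hfit, hmin⟩
  exact stmt1_general hS.smul_mem hδpos hδ hA hx hfit (hmin x (by simpa using he))
end
end

section
/- Let Σ_k be a k-group-sparse model in a Hilbert space H with a finite group collection G whose groups all have size at most d. Then the normalized secant set S(Σ_k) has upper box-counting dimension at most 2kd, i.e. boxdim(S(Σ_k)) ≤ 2kd; in particular it is finite. -/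
noncomputable section
open scoped ENNReal NNReal Pointwise RealInnerProductSpace
open Filter Set Classical MeasureTheory ProbabilityTheory

/-- The restriction `x_g` of `x` to the group of coordinates `g`. -/
def groupProj {H : Type*} [NormedAddCommGroup H] [InnerProductSpace ℝ H] {I : Type*}
    (e : I → H) (g : Finset I) (x : H) : H :=
  ∑ i ∈ g, ⟪x, e i⟫ • e i

/-- The restriction `x_T` of `x` to a set of groups `T`. -/
def groupRestrict {H : Type*} [NormedAddCommGroup H] [InnerProductSpace ℝ H] {I : Type*}
    (e : I → H) (T : Finset (Finset I)) (x : H) : H :=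
  ∑ g ∈ T, groupProj e g x

/-- The `k`-group-sparse model `Σ_k` associated to the group collection `G`. -/
def kGroupSparse {H : Type*} [NormedAddCommGroup H] [InnerProductSpace ℝ H] {I : Type*}
    (e : I → H) (G : Finset (Finset I)) (k : ℕ) : Set H :=
  {x | ∃ T ⊆ G, T.card ≤ k ∧ x = groupRestrict e T x}

/-- The covering number `N(S, α)`: the minimal number of closed balls of radius `α` with
centers in `S` needed to cover `S` (`+∞` if there is no finite cover). -/
def coveringNumber {H : Type*} [NormedAddCommGroup H] (S : Set H) (α : ℝ) : ℕ∞ :=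
  sInf {n : ℕ∞ | ∃ C : Set H, C ⊆ S ∧ C.Finite ∧ (C.ncard : ℕ∞) ≤ n ∧
    ∀ y ∈ S, ∃ c ∈ C, ‖y - c‖ ≤ α}

/-- `log N(S, α)`, as an extended real. -/
def logCover {H : Type*} [NormedAddCommGroup H] (S : Set H) (α : ℝ) : EReal :=
  if h : coveringNumber S α = ⊤ then ⊤
  else ((Real.log ((coveringNumber S α).untop h) : ℝ) : EReal)

/-- The upper box-counting dimension `limsup_{α → 0⁺} log N(S,α) / log (1/α)`. -/
def boxDim {H : Type*} [NormedAddCommGroup H] (S : Set H) : EReal :=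
  Filter.limsup (fun α : ℝ => logCover S α * (((Real.log (1 / α))⁻¹ : ℝ) : EReal))
    (nhdsWithin (0 : ℝ) (Set.Ioi 0))

/-!
Balls of radius `ε / 2` around the points of an `ε`-separated subset of a ball of radius `R` are
disjoint, so comparing volumes shows that in dimension `n` there are at most `(1 + 2R/ε)ⁿ` of them.
As a maximal separated set is a cover, a bounded subset of a finite union of subspaces of dimension
at most `n` has covering numbers `O(ε⁻ⁿ)`, hence upper box-counting dimension at most `n`. Secants
of a union of subspaces `Vᵢ` lie in the union of the sums `Vᵢ + Vⱼ`, and `Σ_k` is contained in the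
union of the spans of the vectors `eᵢ` from at most `k` groups.
-/

section CoveringNumber

lemma coveringNumber_eq_metric_coveringNumber {H : Type*} [NormedAddCommGroup H] (S : Set H)
    (ε : ℝ≥0) : coveringNumber S ε = Metric.coveringNumber ε S := by
  have isCover_iff (C : Set H) : Metric.IsCover ε S C ↔ ∀ y ∈ S, ∃ c ∈ C, ‖y - c‖ ≤ ε := by
    simp only [Metric.isCover_iff_subset_iUnion_closedBall, subset_def, mem_iUnion₂,
      Metric.mem_closedBall, dist_eq_norm, exists_prop]
  apply le_antisymm
  · refine le_iInf₂ fun C hCS => le_iInf fun hC => ?_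
    rcases C.finite_or_infinite with hfin | hinf
    · exact sInf_le ⟨C, hCS, hfin, hfin.cast_ncard_eq.le, (isCover_iff C).1 hC⟩
    · exact hinf.encard_eq ▸ le_top
  · refine le_sInf ?_
    rintro n ⟨C, hCS, hfin, hn, hC⟩
    exact (((isCover_iff C).2 hC).coveringNumber_le_encard hCS).trans
      (hfin.cast_ncard_eq.symm.le.trans hn)

variable {X : Type*} [PseudoEMetricSpace X] {ε : ℝ≥0}

lemma metric_coveringNumber_union_le (A B : Set X) :
    Metric.coveringNumber ε (A ∪ B) ≤ Metric.coveringNumber ε A + Metric.coveringNumber ε B := by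
  by_cases hA : Metric.coveringNumber ε A = ⊤
  · simp [hA]
  by_cases hB : Metric.coveringNumber ε B = ⊤
  · simp [hB]
  obtain ⟨C, hCA, -, hC, hC_card⟩ := Metric.exists_set_encard_eq_coveringNumber hA
  obtain ⟨D, hDB, -, hD, hD_card⟩ := Metric.exists_set_encard_eq_coveringNumber hB
  have hCD : Metric.IsCover ε (A ∪ B) (C ∪ D) := by
    rintro x (hx | hx)
    · obtain ⟨c, hc, hxc⟩ := hC hx
      exact ⟨c, Or.inl hc, hxc⟩
    · obtain ⟨c, hc, hxc⟩ := hD hx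
      exact ⟨c, Or.inr hc, hxc⟩
  calc Metric.coveringNumber ε (A ∪ B)
      ≤ (C ∪ D).encard := hCD.coveringNumber_le_encard (union_subset_union hCA hDB)
    _ ≤ C.encard + D.encard := encard_union_le C D
    _ = Metric.coveringNumber ε A + Metric.coveringNumber ε B := by rw [hC_card, hD_card]

lemma metric_coveringNumber_biUnion_le {ι : Type*} (s : Finset ι) (A : ι → Set X) :
    Metric.coveringNumber ε (⋃ i ∈ s, A i) ≤ ∑ i ∈ s, Metric.coveringNumber ε (A i) := by
  induction s using Finset.induction_on with
  | empty => simp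
  | insert i s hi ih =>
    rw [Finset.set_biUnion_insert, Finset.sum_insert hi]
    exact (metric_coveringNumber_union_le _ _).trans (by gcongr)

end CoveringNumber

section VolumeBound

variable {E : Type*} [NormedAddCommGroup E] [NormedSpace ℝ E] {ε R : ℝ≥0}

lemma encard_le_of_isSeparated_of_subset_closedBall [FiniteDimensional ℝ E] (hε : 0 < ε)
    {C : Set E} {x : E} (hC : C ⊆ Metric.closedBall x R) (hsep : Metric.IsSeparated ε C) :
    (C.encard : ℝ≥0∞) ≤ ((1 + 2 * R / ε) ^ Module.finrank ℝ E : ℝ≥0) := by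
  borelize E
  let μ : Measure E := Measure.addHaar
  have disjoint_balls :
      Pairwise (Function.onFun Disjoint fun c : C => Metric.ball (c : E) (ε / 2)) := by
    intro c c' hcc'
    refine Metric.ball_disjoint_ball ?_
    have hlt : (ε : ℝ≥0∞) < edist (c : E) c' :=
      hsep c.2 c'.2 (Subtype.coe_injective.ne hcc')
    rw [edist_nndist, ENNReal.coe_lt_coe] at hlt
    rw [add_halves]
    exact_mod_cast hlt.le
  have balls_subset :
      ⋃ c : C, Metric.ball (c : E) (ε / 2) ⊆ Metric.ball x ((1 + 2 * R / ε) * (ε / 2)) := by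
    refine iUnion_subset fun c => Metric.ball_subset_ball' ?_
    have hc : dist (c : E) x ≤ R := hC c.2
    calc (ε / 2 : ℝ) + dist (c : E) x ≤ ε / 2 + R := by gcongr
      _ = (1 + 2 * R / ε) * (ε / 2) := by field_simp
  have volume_le : (C.encard : ℝ≥0∞) * μ (Metric.ball 0 (ε / 2)) ≤
      ((1 + 2 * R / ε) ^ Module.finrank ℝ E : ℝ≥0) * μ (Metric.ball 0 (ε / 2)) :=
    calc (C.encard : ℝ≥0∞) * μ (Metric.ball 0 (ε / 2))
        = ∑' c : C, μ (Metric.ball (c : E) (ε / 2)) := by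
          simp only [Measure.addHaar_ball_center, ENNReal.tsum_const, ENat.card_coe_set_eq]
      _ ≤ μ (⋃ c : C, Metric.ball (c : E) (ε / 2)) :=
          tsum_meas_le_meas_iUnion_of_disjoint μ (fun _ => measurableSet_ball) disjoint_balls
      _ ≤ μ (Metric.ball x ((1 + 2 * R / ε) * (ε / 2))) := measure_mono balls_subset
      _ = _ := by
          rw [Measure.addHaar_ball_mul_of_pos μ x (by positivity)]
          congr 1
          exact ENNReal.ofReal_coe_nnreal (p := (1 + 2 * R / ε) ^ Module.finrank ℝ E)
  exact (ENNReal.mul_le_mul_iff_left (Metric.measure_ball_pos μ _ (by positivity)).ne'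
    measure_ball_lt_top.ne).1 volume_le

lemma metric_coveringNumber_le_of_subset_closedBall [FiniteDimensional ℝ E] (hε : 0 < ε)
    {A : Set E} {x : E} (hA : A ⊆ Metric.closedBall x R) :
    (Metric.coveringNumber ε A : ℝ≥0∞) ≤ ((1 + 2 * R / ε) ^ Module.finrank ℝ E : ℝ≥0) := by
  have packingNumber_le :
      (Metric.packingNumber ε A : ℝ≥0∞) ≤ ((1 + 2 * R / ε) ^ Module.finrank ℝ E : ℝ≥0) := by
    simp only [Metric.packingNumber, ENat.toENNReal_iSup, iSup_le_iff]
    exact fun C hCA hsep =>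
      encard_le_of_isSeparated_of_subset_closedBall hε (hCA.trans hA) hsep
  exact (ENat.toENNReal_mono (Metric.coveringNumber_le_packingNumber ε A)).trans packingNumber_le

lemma metric_coveringNumber_le_of_subset_submodule (hε : 0 < ε) (V : Submodule ℝ E)
    [FiniteDimensional ℝ V] {A : Set E} (hAV : A ⊆ V) (hA : A ⊆ Metric.closedBall 0 R) :
    (Metric.coveringNumber ε A : ℝ≥0∞) ≤ ((1 + 2 * R / ε) ^ Module.finrank ℝ V : ℝ≥0) := by
  have hA_image : ((↑) : V → E) '' ((↑) ⁻¹' A) = A :=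
    image_preimage_eq_of_subset (by simpa using hAV)
  rw [← hA_image, isometry_subtype_coe.coveringNumber_image]
  refine metric_coveringNumber_le_of_subset_closedBall hε (x := 0) fun v hv => ?_
  simpa using hA hv

end VolumeBound

section BoxDim

open scoped Topology

lemma logCover_le_log {H : Type*} [NormedAddCommGroup H] {S : Set H} {α C : ℝ} (hC : 1 ≤ C)
    (h : (coveringNumber S α : ℝ≥0∞) ≤ ENNReal.ofReal C) :
    logCover S α ≤ (Real.log C : EReal) := by
  have hne : coveringNumber S α ≠ ⊤ := by
    rw [← ENat.toENNReal_ne_top]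
    exact ne_top_of_le_ne_top ENNReal.ofReal_ne_top h
  rw [logCover, dif_neg hne, EReal.coe_le_coe_iff]
  generalize coveringNumber S α = N at h hne
  lift N to ℕ using hne
  have hN : (N : ℝ) ≤ C := by
    rwa [ENat.toENNReal_coe, ← ENNReal.ofReal_natCast,
      ENNReal.ofReal_le_ofReal_iff (zero_le_one.trans hC)] at h
  change Real.log N ≤ Real.log C
  rcases N.eq_zero_or_pos with rfl | hpos
  · simpa using Real.log_nonneg hC
  · exact Real.log_le_log (by exact_mod_cast hpos) hN

lemma boxDim_le_of_eventually_coveringNumber_le {H : Type*} [NormedAddCommGroup H] {S : Set H}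
    {C D : ℝ} (hD : 0 ≤ D)
    (h : ∀ᶠ α : ℝ in 𝓝[>] 0, (coveringNumber S α : ℝ≥0∞) ≤ ENNReal.ofReal (C * (1 / α) ^ D)) :
    boxDim S ≤ D := by
  set C' := max C 1
  have tendsto_log : Tendsto (fun α : ℝ => Real.log (1 / α)) (𝓝[>] 0) atTop := by
    simp only [one_div]
    exact Real.tendsto_log_atTop.comp tendsto_inv_nhdsGT_zero
  have tendsto_bound : Tendsto
      (fun α : ℝ => ((Real.log C' * (Real.log (1 / α))⁻¹ + D : ℝ) : EReal)) (𝓝[>] 0) (𝓝 D) := by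
    refine (continuous_coe_real_ereal.tendsto _).comp ?_
    simpa using ((tendsto_inv_atTop_zero.comp tendsto_log).const_mul (Real.log C')).add_const D
  rw [← tendsto_bound.limsup_eq]
  refine limsup_le_limsup ?_
  filter_upwards [h, Ioo_mem_nhdsGT zero_lt_one] with α hα ⟨hα0, hα1⟩
  have one_lt_inv : 1 < 1 / α := one_lt_one_div hα0 hα1
  have log_pos : 0 < Real.log (1 / α) := Real.log_pos one_lt_inv
  have one_le_pow : 1 ≤ (1 / α) ^ D := Real.one_le_rpow one_lt_inv.le hD
  have one_le_bound : 1 ≤ C' * (1 / α) ^ D :=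
    one_le_mul_of_one_le_of_one_le (le_max_right _ _) one_le_pow
  have logCover_le : logCover S α ≤ (Real.log (C' * (1 / α) ^ D) : EReal) := by
    refine logCover_le_log one_le_bound (hα.trans (ENNReal.ofReal_le_ofReal ?_))
    gcongr
    exact le_max_left _ _
  calc logCover S α * (((Real.log (1 / α))⁻¹ : ℝ) : EReal)
      ≤ (Real.log (C' * (1 / α) ^ D) : EReal) * (((Real.log (1 / α))⁻¹ : ℝ) : EReal) :=
        mul_le_mul_of_nonneg_right logCover_le (by exact_mod_cast (inv_pos.2 log_pos).le)
    _ = ((Real.log C' * (Real.log (1 / α))⁻¹ + D : ℝ) : EReal) := by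
        rw [← EReal.coe_mul, Real.log_mul (by positivity) (by positivity),
          Real.log_rpow (by positivity), add_mul, mul_inv_cancel_right₀ log_pos.ne']

end BoxDim

section UnionOfSubspaces

variable {E ι : Type*} [NormedAddCommGroup E] [NormedSpace ℝ E] {s : Finset ι}
  {V : ι → Submodule ℝ E}

lemma normSecant_subset_sphere (S : Set E) : normSecant S ⊆ Metric.sphere 0 1 := by
  rintro _ ⟨y, -, hy, rfl⟩
  exact mem_sphere_zero_iff_norm.2 (norm_smul_inv_norm (𝕜 := ℝ) hy)

lemma normSecant_subset_biUnion_sup {S : Set E} (hS : S ⊆ ⋃ i ∈ s, (V i : Set E)) :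
    normSecant S ⊆ ⋃ p ∈ s ×ˢ s, ((V p.1 ⊔ V p.2 : Submodule ℝ E) : Set E) := by
  rintro _ ⟨_, ⟨x, hx, x', hx', rfl⟩, -, rfl⟩
  obtain ⟨i, hi, hxi⟩ := mem_iUnion₂.1 (hS hx)
  obtain ⟨j, hj, hxj⟩ := mem_iUnion₂.1 (hS hx')
  refine mem_iUnion₂.2 ⟨(i, j), Finset.mk_mem_product hi hj, Submodule.smul_mem _ _ ?_⟩
  exact Submodule.sub_mem _ (Submodule.mem_sup_left hxi) (Submodule.mem_sup_right hxj)

variable [∀ i, FiniteDimensional ℝ (V i)] {n : ℕ}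

lemma metric_coveringNumber_le_of_subset_biUnion_submodule
    (hn : ∀ i ∈ s, Module.finrank ℝ (V i) ≤ n) {A : Set E} (hAV : A ⊆ ⋃ i ∈ s, (V i : Set E))
    {ε R : ℝ≥0} (hε : 0 < ε) (hA : A ⊆ Metric.closedBall 0 R) :
    (Metric.coveringNumber ε A : ℝ≥0∞) ≤ (s.card * (1 + 2 * R / ε) ^ n : ℝ≥0) := by
  have hA_eq : A = ⋃ i ∈ s, A ∩ V i := by
    rw [← inter_iUnion₂, inter_eq_left.2 hAV]
  have piece_le (i) (hi : i ∈ s) :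
      (Metric.coveringNumber ε (A ∩ V i) : ℝ≥0∞) ≤ ((1 + 2 * R / ε) ^ n : ℝ≥0) := by
    refine (metric_coveringNumber_le_of_subset_submodule hε (V i) inter_subset_right
      (inter_subset_left.trans hA)).trans (ENNReal.coe_le_coe.2 ?_)
    exact pow_le_pow_right₀ le_self_add (hn i hi)
  calc (Metric.coveringNumber ε A : ℝ≥0∞)
      ≤ ((∑ i ∈ s, Metric.coveringNumber ε (A ∩ V i) : ℕ∞) : ℝ≥0∞) := by
        conv_lhs => rw [hA_eq]
        exact ENat.toENNReal_mono (metric_coveringNumber_biUnion_le s _)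
    _ = ∑ i ∈ s, (Metric.coveringNumber ε (A ∩ V i) : ℝ≥0∞) :=
        map_sum ENat.toENNRealRingHom _ s
    _ ≤ ∑ i ∈ s, (((1 + 2 * R / ε) ^ n : ℝ≥0) : ℝ≥0∞) := Finset.sum_le_sum piece_le
    _ = (s.card * (1 + 2 * R / ε) ^ n : ℝ≥0) := by
        rw [Finset.sum_const, nsmul_eq_mul, ENNReal.coe_mul, ENNReal.coe_natCast]

lemma boxDim_le_of_subset_biUnion_submodule (hn : ∀ i ∈ s, Module.finrank ℝ (V i) ≤ n)
    {A : Set E} (hAV : A ⊆ ⋃ i ∈ s, (V i : Set E)) (hA : Bornology.IsBounded A) :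
    boxDim A ≤ (n : ℝ) := by
  obtain ⟨R, hR, hAR⟩ := hA.exists_pos_norm_le
  lift R to ℝ≥0 using hR.le
  refine boxDim_le_of_eventually_coveringNumber_le (C := s.card * (1 + 2 * R) ^ n)
    n.cast_nonneg ?_
  filter_upwards [Ioo_mem_nhdsGT zero_lt_one] with ε ⟨hε0, hε1⟩
  lift ε to ℝ≥0 using hε0.le
  have one_le_inv : (1 : ℝ) ≤ 1 / ε := (one_lt_one_div hε0 hε1).le
  have scale_le : (1 + 2 * R / ε : ℝ) ≤ (1 + 2 * R) * (1 / ε) :=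
    calc (1 + 2 * R / ε : ℝ) ≤ 1 / ε + 2 * R / ε := by gcongr
      _ = (1 + 2 * R) * (1 / ε) := by ring
  rw [coveringNumber_eq_metric_coveringNumber, Real.rpow_natCast]
  refine (metric_coveringNumber_le_of_subset_biUnion_submodule hn hAV hε0
    (fun x hx => by simpa using hAR x hx)).trans ?_
  rw [← ENNReal.ofReal_coe_nnreal]
  refine ENNReal.ofReal_le_ofReal ?_
  push_cast
  calc (s.card * (1 + 2 * R / ε) ^ n : ℝ)
      ≤ s.card * ((1 + 2 * R) * (1 / ε)) ^ n := by gcongr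
    _ = s.card * (1 + 2 * R) ^ n * (1 / ε) ^ n := by rw [mul_pow, mul_assoc]

lemma boxDim_normSecant_le_of_subset_biUnion_submodule
    (hn : ∀ i ∈ s, Module.finrank ℝ (V i) ≤ n) {S : Set E} (hS : S ⊆ ⋃ i ∈ s, (V i : Set E)) :
    boxDim (normSecant S) ≤ ((2 * n : ℕ) : ℝ) := by
  refine boxDim_le_of_subset_biUnion_submodule (fun p hp => ?_) (normSecant_subset_biUnion_sup hS)
    (Metric.isBounded_sphere.subset (normSecant_subset_sphere S))
  obtain ⟨hp₁, hp₂⟩ := Finset.mem_product.1 hp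
  calc Module.finrank ℝ (V p.1 ⊔ V p.2 : Submodule ℝ E)
      ≤ Module.finrank ℝ (V p.1) + Module.finrank ℝ (V p.2) :=
        Submodule.finrank_add_le_finrank_add_finrank _ _
    _ ≤ n + n := add_le_add (hn _ hp₁) (hn _ hp₂)
    _ = 2 * n := (two_mul n).symm

end UnionOfSubspaces

section GroupSparse

variable {H I : Type*} [NormedAddCommGroup H] [InnerProductSpace ℝ H] (e : I → H)

/-- The subspace spanned by the vectors `e i` with `i` in one of the groups of `T`; it contains
every restriction `x_T`. -/
def groupSpan (T : Finset (Finset I)) : Submodule ℝ H :=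
  Submodule.span ℝ ((T.biUnion id).image e)

instance (T : Finset (Finset I)) : FiniteDimensional ℝ (groupSpan e T) :=
  FiniteDimensional.span_finset ℝ _

lemma finrank_groupSpan_le {T : Finset (Finset I)} {d : ℕ} (hd : ∀ g ∈ T, g.card ≤ d) :
    Module.finrank ℝ (groupSpan e T) ≤ T.card * d :=
  calc Module.finrank ℝ (groupSpan e T)
      ≤ ((T.biUnion id).image e).card := finrank_span_finset_le_card _
    _ ≤ (T.biUnion id).card := Finset.card_image_le
    _ ≤ T.card * d := Finset.card_biUnion_le_card_mul T id d hd

lemma groupRestrict_mem_groupSpan (T : Finset (Finset I)) (x : H) :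
    groupRestrict e T x ∈ groupSpan e T :=
  Submodule.sum_mem _ fun g hg => Submodule.sum_mem _ fun _ hi => Submodule.smul_mem _ _ <|
    Submodule.subset_span <| Finset.mem_image_of_mem e <| Finset.mem_biUnion.2 ⟨g, hg, hi⟩

lemma kGroupSparse_subset_biUnion_groupSpan (G : Finset (Finset I)) (k : ℕ) :
    kGroupSparse e G k ⊆ ⋃ T ∈ {T ∈ G.powerset | T.card ≤ k}, (groupSpan e T : Set H) := by
  rintro x ⟨T, hTG, hTk, hx⟩
  refine mem_iUnion₂.2 ⟨T, by simp [hTG, hTk], ?_⟩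
  rw [hx]
  exact groupRestrict_mem_groupSpan e T x

theorem stmt6_general (G : Finset (Finset I)) (d : ℕ) (hd : ∀ g ∈ G, g.card ≤ d) (k : ℕ) :
    boxDim (normSecant (kGroupSparse e G k)) ≤ ((2 * k * d : ℕ) : ℝ) := by
  rw [mul_assoc]
  refine boxDim_normSecant_le_of_subset_biUnion_submodule (fun T hT => ?_)
    (kGroupSparse_subset_biUnion_groupSpan e G k)
  obtain ⟨hTG, hTk⟩ : T ⊆ G ∧ T.card ≤ k := by simpa using hT
  exact (finrank_groupSpan_le e fun g hg => hd g (hTG hg)).trans (Nat.mul_le_mul_right d hTk)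

end GroupSparse

/-- the normalized secant set of a `k`-group-sparse model with groups of size
at most `d` has upper box-counting dimension at most `2kd`; in particular it is finite. -/
theorem stmt6 {H : Type*} [NormedAddCommGroup H] [InnerProductSpace ℝ H] [CompleteSpace H]
    {I : Type*} (B : HilbertBasis I ℝ H) (G : Finset (Finset I))
    (hdisj : ∀ g ∈ G, ∀ g' ∈ G, g ≠ g' → Disjoint g g')
    (d : ℕ) (hd : ∀ g ∈ G, g.card ≤ d) (k : ℕ) :
    boxDim (normSecant (kGroupSparse (fun i => B i) G k)) ≤ (((2 * k * d : ℕ) : ℝ) : EReal) ∧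
    boxDim (normSecant (kGroupSparse (fun i => B i) G k)) < ⊤ := by
  have boxDim_le := stmt6_general (fun i => B i) G d hd k
  exact ⟨boxDim_le, boxDim_le.trans_lt (EReal.coe_lt_top _)⟩
end
end

section
/- Let H be a Hilbert space, Σ ⊆ H, and α ∈ (0,1). Suppose the normalized secant set S(Σ) admits a finite α-cover: there exist c_1,…,c_N ∈ S(Σ) such that every y ∈ S(Σ) satisfies ‖y − c_i‖_H ≤ α for some i. Let H₀ := span{c_1,…,c_N} and let P_{H₀} denote the orthogonal projection onto H₀. Then H₀ is a finite-dimensional subspace (of dimension at most N) and for every x ∈ Σ−Σ: (1−α)·‖x‖_H ≤ ‖P_{H₀} x‖_H ≤ ‖x‖_H. -/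
noncomputable section
open scoped ENNReal NNReal Pointwise RealInnerProductSpace
open Filter Set Classical MeasureTheory ProbabilityTheory

/-!
The projection `P x` is the point of `H₀` nearest to `x`. If `x / ‖x‖` lies within `α` of a center
`c i`, then `x` lies within `α ‖x‖` of `‖x‖ • c i ∈ H₀`. Hence `‖x - P x‖ ≤ α ‖x‖`, and the triangle
inequality gives `(1 - α) ‖x‖ ≤ ‖P x‖`.
-/

theorem norm_sub_norm_smul_eq {H : Type*} [NormedAddCommGroup H] [NormedSpace ℝ H] {x : H}
    (hx : x ≠ 0) (v : H) : ‖x - ‖x‖ • v‖ = ‖x‖ * ‖‖x‖⁻¹ • x - v‖ := by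
  rw [← norm_smul_of_nonneg (norm_nonneg x), smul_sub, smul_inv_smul₀ (norm_ne_zero_iff.2 hx)]

theorem exists_mem_norm_sub_le_mul_norm_of_mem_secantSet {𝕜 H : Type*} [Semiring 𝕜] [SMul ℝ 𝕜]
    [NormedAddCommGroup H] [NormedSpace ℝ H] [Module 𝕜 H] [IsScalarTower ℝ 𝕜 H]
    {S : Set H} {α : ℝ} (K : Submodule 𝕜 H) (hK : ∀ y ∈ normSecant S, ∃ v ∈ K, ‖y - v‖ ≤ α)
    {x : H} (hx : x ∈ secantSet S) : ∃ v ∈ K, ‖x - v‖ ≤ α * ‖x‖ := by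
  rcases eq_or_ne x 0 with rfl | hx0
  · exact ⟨0, K.zero_mem, by simp⟩
  obtain ⟨v, hvK, hv⟩ := hK (‖x‖⁻¹ • x) ⟨x, hx, hx0, rfl⟩
  refine ⟨‖x‖ • v, K.smul_of_tower_mem ‖x‖ hvK, ?_⟩
  rw [norm_sub_norm_smul_eq hx0, mul_comm α]
  gcongr

section OrthogonalProjection

variable {𝕜 H : Type*} [RCLike 𝕜] [NormedAddCommGroup H] [InnerProductSpace 𝕜 H]

theorem norm_sub_orthogonalProjectionOnto_le (K : Submodule 𝕜 H) [K.HasOrthogonalProjection]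
    (x : H) {v : H} (hv : v ∈ K) : ‖x - K.orthogonalProjectionOnto x‖ ≤ ‖x - v‖ := by
  have hbdd : BddBelow (range fun w : K ↦ ‖x - w‖) :=
    ⟨0, forall_mem_range.2 fun w ↦ norm_nonneg (x - w)⟩
  exact (K.starProjection_minimal x).trans_le (ciInf_le hbdd ⟨v, hv⟩)

theorem one_sub_mul_norm_le_norm_orthogonalProjectionOnto (K : Submodule 𝕜 H)
    [K.HasOrthogonalProjection] {α : ℝ} {x v : H} (hv : v ∈ K) (hxv : ‖x - v‖ ≤ α * ‖x‖) :
    (1 - α) * ‖x‖ ≤ ‖(K.orthogonalProjectionOnto x : H)‖ := by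
  have hdist : ‖x - K.orthogonalProjectionOnto x‖ ≤ α * ‖x‖ :=
    (norm_sub_orthogonalProjectionOnto_le K x hv).trans hxv
  have htriangle := norm_sub_norm_le x (K.orthogonalProjectionOnto x)
  linarith

theorem stmt8_general [NormedSpace ℝ H] [IsScalarTower ℝ 𝕜 H] {ι : Type*} [Fintype ι]
    (S : Set H) (α : ℝ) (c : ι → H) (hcover : ∀ y ∈ normSecant S, ∃ i, ‖y - c i‖ ≤ α) :
    haveI : FiniteDimensional 𝕜 (Submodule.span 𝕜 (range c)) :=
      FiniteDimensional.span_of_finite 𝕜 (finite_range c)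
    Module.finrank 𝕜 (Submodule.span 𝕜 (range c)) ≤ Fintype.card ι ∧
    ∀ x ∈ secantSet S,
      (1 - α) * ‖x‖ ≤ ‖((Submodule.span 𝕜 (range c)).orthogonalProjectionOnto x : H)‖ ∧
      ‖((Submodule.span 𝕜 (range c)).orthogonalProjectionOnto x : H)‖ ≤ ‖x‖ := by
  have : FiniteDimensional 𝕜 (Submodule.span 𝕜 (range c)) :=
    FiniteDimensional.span_of_finite 𝕜 (finite_range c)
  have hspan : ∀ y ∈ normSecant S, ∃ v ∈ Submodule.span 𝕜 (range c), ‖y - v‖ ≤ α := by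
    intro y hy
    obtain ⟨i, hi⟩ := hcover y hy
    exact ⟨c i, Submodule.subset_span (mem_range_self i), hi⟩
  refine ⟨finrank_range_le_card c, fun x hx ↦
    ⟨?_, Submodule.norm_orthogonalProjectionOnto_apply_le _ x⟩⟩
  obtain ⟨v, hv, hxv⟩ := exists_mem_norm_sub_le_mul_norm_of_mem_secantSet _ hspan hx
  exact one_sub_mul_norm_le_norm_orthogonalProjectionOnto _ hv hxv

end OrthogonalProjection

/-- the span of the centers of a finite `α`-cover of the normalized secant set
is a finite-dimensional subspace whose orthogonal projection preserves the norms of all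
secant vectors up to a factor `1 - α`. -/
theorem stmt8 {H : Type*} [NormedAddCommGroup H] [InnerProductSpace ℝ H] [CompleteSpace H]
    (S : Set H) (α : ℝ) (hα0 : 0 < α) (hα1 : α < 1)
    (N : ℕ) (c : Fin N → H) (hc : ∀ i, c i ∈ normSecant S)
    (hcover : ∀ y ∈ normSecant S, ∃ i, ‖y - c i‖ ≤ α) :
    haveI : FiniteDimensional ℝ (Submodule.span ℝ (Set.range c)) :=
      FiniteDimensional.span_of_finite ℝ (Set.finite_range c)
    Module.finrank ℝ (Submodule.span ℝ (Set.range c)) ≤ N ∧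
    ∀ x ∈ secantSet S,
      (1 - α) * ‖x‖ ≤ ‖(Submodule.orthogonalProjectionOnto (Submodule.span ℝ (Set.range c)) x : H)‖ ∧
      ‖(Submodule.orthogonalProjectionOnto (Submodule.span ℝ (Set.range c)) x : H)‖ ≤ ‖x‖ := by
  simpa only [Fintype.card_fin] using stmt8_general (𝕜 := ℝ) S α c hcover
end
end

section
/- Let H and F be Hilbert spaces, Σ ⊆ H, and A : H → F a continuous linear operator. Suppose there exist a map Δ : F → H and a constant C ≥ 0 such that for every x ∈ Σ and every e ∈ F one has ‖Δ(Ax + e) − x‖_H ≤ C·‖e‖_F (a stable decoder for Σ). Then A satisfies the lower restricted isometry inequality ‖u‖_H ≤ C·‖Au‖_F for every u in the secant set Σ−Σ := {x−x' : x,x' ∈ Σ}. -/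
noncomputable section
open scoped ENNReal NNReal Pointwise RealInnerProductSpace
open Filter Set Classical MeasureTheory ProbabilityTheory

/-!
A stable decoder recovers every `x ∈ Σ` exactly from the noiseless measurement `A x`. For
`x, y ∈ Σ`, reading `A x` as the measurement of `y` with noise `A x - A y` therefore bounds
`‖x - y‖` by `C * ‖A x - A y‖`.
-/

section StableDecoder

variable {X Y : Type*} [MetricSpace X] [PseudoMetricSpace Y]
  {S : Set X} {A : X → Y} {Δ : Y → X} {C : ℝ}

theorem leftInvOn_of_dist_decoder_le
    (hΔ : ∀ x ∈ S, ∀ z, dist (Δ z) x ≤ C * dist z (A x)) : LeftInvOn Δ A S := by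
  intro x hx
  simpa only [dist_self, mul_zero, dist_le_zero] using hΔ x hx (A x)

theorem dist_le_mul_dist_of_dist_decoder_le
    (hΔ : ∀ x ∈ S, ∀ z, dist (Δ z) x ≤ C * dist z (A x)) {x y : X} (hx : x ∈ S) (hy : y ∈ S) :
    dist x y ≤ C * dist (A x) (A y) :=
  calc
    dist x y = dist (Δ (A x)) y := by rw [leftInvOn_of_dist_decoder_le hΔ hx]
    _ ≤ C * dist (A x) (A y) := hΔ y hy (A x)

end StableDecoder

theorem stmt10_general {H F : Type*} [NormedAddCommGroup H] [SeminormedAddCommGroup F]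
    (S : Set H) (A : H →+ F) (Δ : F → H) (C : ℝ)
    (hdec : ∀ x ∈ S, ∀ e : F, ‖Δ (A x + e) - x‖ ≤ C * ‖e‖) :
    ∀ u ∈ secantSet S, ‖u‖ ≤ C * ‖A u‖ := by
  have hΔ : ∀ x ∈ S, ∀ z, dist (Δ z) x ≤ C * dist z (A x) := fun x hx z ↦ by
    simpa only [dist_eq_norm_sub, add_sub_cancel] using hdec x hx (z - A x)
  rintro _ ⟨x, hx, y, hy, rfl⟩
  simpa only [dist_eq_norm_sub, map_sub] using dist_le_mul_dist_of_dist_decoder_le hΔ hx hy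

/-- the existence of a stable decoder implies the lower restricted isometry
inequality on the secant set. -/
theorem stmt10 {H F : Type*} [NormedAddCommGroup H] [InnerProductSpace ℝ H] [CompleteSpace H]
    [NormedAddCommGroup F] [InnerProductSpace ℝ F] [CompleteSpace F]
    (S : Set H) (A : H →L[ℝ] F) (Δ : F → H) (C : ℝ) (hC : 0 ≤ C)
    (hdec : ∀ x ∈ S, ∀ e : F, ‖Δ (A x + e) - x‖ ≤ C * ‖e‖) :
    ∀ u ∈ secantSet S, ‖u‖ ≤ C * ‖A u‖ := by
  exact stmt10_general S (A : H →+ F) Δ C hdec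
end
end

section
/- Let H = H_1 ⊕ … ⊕ H_J be an orthogonal decomposition of a Hilbert space, F = F_1 ⊕ … ⊕ F_J an orthogonal decomposition of another Hilbert space, and A : H → F block diagonal, i.e. A(x_1,…,x_J) = (A_1 x_1, …, A_J x_J) for continuous linear operators A_j : H_j → F_j. Let Σ_j ⊆ H_j with 0 ∈ Σ_j for each j, and let Σ := Σ_1 × … × Σ_J ⊆ H. Then for any δ ∈ [0,1): A satisfies the RIP on Σ−Σ with constant δ if and only if every block A_j satisfies the RIP on Σ_j−Σ_j with constant δ. -/
noncomputable section
open scoped ENNReal NNReal Pointwise RealInnerProductSpace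
open Filter Set Classical MeasureTheory ProbabilityTheory

/-!
The secant set of a product is the product of the secant sets, and squared `ℓ²` norms are sums of
squared block norms, so the blockwise inequalities add up to the global ones. Conversely, the secant
set of a nonempty set contains `0`, so every secant of a single block, extended by zero, is a secant
of the product; the block-diagonal operator maps it to the image of that block, extended by zero,
and extension by zero preserves norms.
-/

theorem zero_mem_secantSet {H : Type*} [NormedAddCommGroup H] {S : Set H} (hS : S.Nonempty) :
    (0 : H) ∈ secantSet S :=
  let ⟨x, hx⟩ := hS
  ⟨x, hx, x, hx, (sub_self x).symm⟩

section Secant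

variable {ι : Type*} [Fintype ι] {p : ℝ≥0∞} [Fact (1 ≤ p)]
  {E : ι → Type*} [∀ j, NormedAddCommGroup (E j)] {S : ∀ j, Set (E j)}

theorem mem_secantSet_piLp_iff {u : PiLp p E} :
    u ∈ secantSet {x : PiLp p E | ∀ j, x j ∈ S j} ↔ ∀ j, u j ∈ secantSet (S j) := by
  constructor
  · rintro ⟨x, hx, y, hy, rfl⟩ j
    exact ⟨x j, hx j, y j, hy j, rfl⟩
  · intro hu
    choose x hx y hy hxy using hu
    exact ⟨WithLp.toLp p x, hx, WithLp.toLp p y, hy, PiLp.ext hxy⟩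

theorem single_mem_secantSet_piLp [DecidableEq ι] (hS : ∀ j, (S j).Nonempty) {j : ι}
    {v : E j} (hv : v ∈ secantSet (S j)) :
    PiLp.single p j v ∈ secantSet {x : PiLp p E | ∀ j, x j ∈ S j} := by
  refine mem_secantSet_piLp_iff.mpr fun i => ?_
  obtain rfl | hij := eq_or_ne i j
  · simpa using hv
  · simpa [hij] using zero_mem_secantSet (hS i)

end Secant

theorem blockDiagonal_single {ι : Type*} [DecidableEq ι] {p : ℝ≥0∞} {E G : ι → Type*}
    [∀ j, AddCommGroup (E j)] [∀ j, AddCommGroup (G j)] {B : ∀ j, E j → G j}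
    {A : PiLp p E → PiLp p G} (hA : ∀ x j, A x j = B j (x j)) (hB : ∀ j, B j 0 = 0)
    (j : ι) (v : E j) :
    A (PiLp.single p j v) = PiLp.single p j (B j v) :=
  PiLp.ext fun i => (hA _ i).trans (Pi.apply_single B hB j v i)

section BlockDiagonal

variable {𝕜 : Type*} [RCLike 𝕜] {ι : Type*} [Fintype ι] {E G : ι → Type*}
  [∀ j, NormedAddCommGroup (E j)] [∀ j, NormedSpace 𝕜 (E j)]
  [∀ j, NormedAddCommGroup (G j)] [∀ j, NormedSpace 𝕜 (G j)]
  {B : ∀ j, E j →L[𝕜] G j} {A : PiLp 2 E →L[𝕜] PiLp 2 G} {S : ∀ j, Set (E j)} {δ : ℝ}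

theorem SatisfiesRIP.block (hA : ∀ x j, A x j = B j (x j)) (hS : ∀ j, (S j).Nonempty)
    (h : SatisfiesRIP A {x : PiLp 2 E | ∀ j, x j ∈ S j} δ) (j : ι) :
    SatisfiesRIP (B j) (S j) δ := by
  intro v hv
  have hbounds := h _ (single_mem_secantSet_piLp hS hv)
  rwa [blockDiagonal_single hA (fun i => map_zero (B i)), PiLp.norm_single,
    PiLp.norm_single] at hbounds

theorem SatisfiesRIP.of_blocks (hA : ∀ x j, A x j = B j (x j))
    (h : ∀ j, SatisfiesRIP (B j) (S j) δ) :
    SatisfiesRIP A {x : PiLp 2 E | ∀ j, x j ∈ S j} δ := by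
  intro u hu
  have hbounds := fun j => h j (u j) (mem_secantSet_piLp_iff.mp hu j)
  simp only [PiLp.norm_sq_eq_of_L2, hA, Finset.mul_sum]
  exact ⟨Finset.sum_le_sum fun j _ => (hbounds j).1, Finset.sum_le_sum fun j _ => (hbounds j).2⟩

theorem stmt12_general (hA : ∀ x j, A x j = B j (x j)) (hS : ∀ j, (S j).Nonempty) :
    SatisfiesRIP A {x : PiLp 2 E | ∀ j, x j ∈ S j} δ ↔ ∀ j, SatisfiesRIP (B j) (S j) δ :=
  ⟨SatisfiesRIP.block hA hS, SatisfiesRIP.of_blocks hA⟩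

end BlockDiagonal

/-- a block-diagonal operator satisfies the RIP on the secant set of a
product model (each factor containing `0`) iff each block satisfies the RIP on the secant
set of the corresponding factor, with the same constant. -/
theorem stmt12 {J : ℕ} (Hs Fs : Fin J → Type*)
    [∀ j, NormedAddCommGroup (Hs j)] [∀ j, InnerProductSpace ℝ (Hs j)]
    [∀ j, CompleteSpace (Hs j)]
    [∀ j, NormedAddCommGroup (Fs j)] [∀ j, InnerProductSpace ℝ (Fs j)]
    [∀ j, CompleteSpace (Fs j)]
    (As : ∀ j, Hs j →L[ℝ] Fs j)
    (A : PiLp 2 Hs →L[ℝ] PiLp 2 Fs)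
    (hA : ∀ (x : PiLp 2 Hs) (j : Fin J), A x j = As j (x j))
    (Ss : ∀ j, Set (Hs j)) (h0 : ∀ j, (0 : Hs j) ∈ Ss j)
    (δ : ℝ) (hδ0 : 0 ≤ δ) (hδ1 : δ < 1) :
    SatisfiesRIP A {x : PiLp 2 Hs | ∀ j, x j ∈ Ss j} δ ↔
      ∀ j, SatisfiesRIP (As j) (Ss j) δ := by
  exact stmt12_general hA fun j => ⟨0, h0 j⟩
end
end

section
/- Let Σ be a nonzero linear subspace of a real or complex Hilbert space H and let f := ι_Σ be its characteristic function (ι_Σ(x) = 0 if x ∈ Σ and +∞ otherwise). Then δ_Σ(f) = 1. -/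
noncomputable section
open scoped ENNReal NNReal Pointwise RealInnerProductSpace
open Filter Set Classical MeasureTheory ProbabilityTheory

/-! For `x, z` in a subspace `Σ` the atomic norm `‖x + z‖_Σ` is the Hilbert norm, so the radicand
in `δ_Σ(x, z)` is `‖z‖²` and `δ_Σ(x, z) = -Re⟪x, z⟫ / (‖x‖ ‖z‖)`. By Cauchy–Schwarz this is at
most `1`, with equality at `x = -z`. The descent set of `ι_Σ` is `Σ` itself, so the infimum over
`z` is that of the constant `1`. -/

section AtomicNorm

variable {H : Type*} [NormedAddCommGroup H] [NormedSpace ℝ H]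

lemma atomicNorm_smul_le {A : Set H} {a : H} (ha : a ∈ A) {r : ℝ} (hr : 0 ≤ r) :
    atomicNorm A (r • a) ≤ ENNReal.ofReal r :=
  sInf_le ⟨r, hr, rfl, smul_mem_smul_set (subset_closure (subset_convexHull ℝ A ha))⟩

lemma enorm_le_atomicNorm {A : Set H} (hA : A ⊆ Metric.closedBall 0 1) (x : H) :
    ‖x‖ₑ ≤ atomicNorm A x := by
  refine le_sInf ?_
  rintro _ ⟨r, hr, rfl, v, hv, rfl⟩
  have hv_ball : v ∈ Metric.closedBall (0 : H) 1 :=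
    closure_minimal (convexHull_min hA (convex_closedBall 0 1)) Metric.isClosed_closedBall hv
  rw [← ofReal_norm]
  refine ENNReal.ofReal_le_ofReal ?_
  calc ‖r • v‖ = r * ‖v‖ := norm_smul_of_nonneg hr v
    _ ≤ r := mul_le_of_le_one_right hr (mem_closedBall_zero_iff.mp hv_ball)

lemma enorm_le_sigmaNorm (S : Set H) (x : H) : ‖x‖ₑ ≤ sigmaNorm S x :=
  enorm_le_atomicNorm (fun _ hu => mem_closedBall_zero_iff.mpr (le_of_eq hu.2)) x

lemma exists_norm_eq_one_and_norm_smul_eq {W : Submodule ℝ H} (hW : W ≠ ⊥) {y : H} (hy : y ∈ W) :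
    ∃ u ∈ W, ‖u‖ = 1 ∧ ‖y‖ • u = y := by
  have normalize {w : H} (hw : w ∈ W) (hw0 : w ≠ 0) : ‖w‖⁻¹ • w ∈ W ∧ ‖‖w‖⁻¹ • w‖ = 1 :=
    ⟨W.smul_mem _ hw, norm_smul_inv_norm (𝕜 := ℝ) hw0⟩
  rcases eq_or_ne y 0 with rfl | hy0
  · obtain ⟨w, hw, hw0⟩ := W.exists_mem_ne_zero_of_ne_bot hW
    exact ⟨_, (normalize hw hw0).1, (normalize hw hw0).2, by rw [norm_zero, zero_smul]⟩
  · exact ⟨_, (normalize hy hy0).1, (normalize hy hy0).2,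
      smul_inv_smul₀ (norm_ne_zero_iff.mpr hy0) y⟩

lemma sigmaNorm_eq_enorm {W : Submodule ℝ H} (hW : W ≠ ⊥) {y : H} (hy : y ∈ W) :
    sigmaNorm (W : Set H) y = ‖y‖ₑ := by
  refine le_antisymm ?_ (enorm_le_sigmaNorm _ y)
  obtain ⟨u, hu, hu_norm, hy_eq⟩ := exists_norm_eq_one_and_norm_smul_eq hW hy
  calc sigmaNorm (W : Set H) y = sigmaNorm (W : Set H) (‖y‖ • u) := by rw [hy_eq]
    _ ≤ ENNReal.ofReal ‖y‖ := atomicNorm_smul_le (mem_inter hu hu_norm) (norm_nonneg y)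
    _ = ‖y‖ₑ := ofReal_norm y

end AtomicNorm

lemma descentSet_ite_mem {H : Type*} [NormedAddCommGroup H] (G : AddSubgroup H) :
    descentSet (G : Set H) (fun x => if x ∈ G then 0 else ⊤) = G := by
  ext z
  constructor
  · rintro ⟨x, hx, hxz⟩
    rw [SetLike.mem_coe] at hx ⊢
    have hxz_mem : x + z ∈ G := by
      by_contra h
      simp [hx, h] at hxz
    exact (G.add_mem_cancel_left hx).mp hxz_mem
  · intro hz
    rw [SetLike.mem_coe] at hz
    exact ⟨0, G.zero_mem, by simp [hz]⟩

section Delta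

variable {𝕜 : Type*} [RCLike 𝕜] {H : Type*} [NormedAddCommGroup H] [InnerProductSpace 𝕜 H]
  [NormedSpace ℝ H] {W : Submodule ℝ H} {x z : H}

lemma sigmaNorm_add_sq_sub_eq (hW : W ≠ ⊥) (hx : x ∈ W) (hz : z ∈ W) :
    (sigmaNorm (W : Set H) (x + z)).toReal ^ 2 - ‖x‖ ^ 2 - 2 * RCLike.re (inner 𝕜 x z) =
      ‖z‖ ^ 2 := by
  rw [sigmaNorm_eq_enorm hW (W.add_mem hx hz), toReal_enorm, norm_add_sq (𝕜 := 𝕜)]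
  ring

lemma deltaXZ_eq_neg_re_inner_div (hW : W ≠ ⊥) (hx : x ∈ W) (hz : z ∈ W) :
    deltaXZ 𝕜 (W : Set H) x z = -RCLike.re (inner 𝕜 x z) / (‖x‖ * ‖z‖) := by
  have hfinite : sigmaNorm (W : Set H) (x + z) ≠ ⊤ := by
    rw [sigmaNorm_eq_enorm hW (W.add_mem hx hz)]
    exact enorm_ne_top
  rw [deltaXZ, if_neg hfinite, sigmaNorm_add_sq_sub_eq hW hx hz, Real.sqrt_sq (norm_nonneg z)]

lemma deltaXZ_le_one (hW : W ≠ ⊥) (hx : x ∈ W) (hz : z ∈ W) :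
    deltaXZ 𝕜 (W : Set H) x z ≤ 1 := by
  rw [deltaXZ_eq_neg_re_inner_div hW hx hz]
  refine div_le_one_of_le₀ ?_ (by positivity)
  calc -RCLike.re (inner 𝕜 x z) = RCLike.re (inner 𝕜 (-x) z) := by rw [inner_neg_left, map_neg]
    _ ≤ ‖-x‖ * ‖z‖ := re_inner_le_norm _ _
    _ = ‖x‖ * ‖z‖ := by rw [norm_neg]

lemma deltaXZ_neg_self (hz : z ∈ W) (hz0 : z ≠ 0) : deltaXZ 𝕜 (W : Set H) (-z) z = 1 := by
  have hW : W ≠ ⊥ := W.ne_bot_iff.mpr ⟨z, hz, hz0⟩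
  rw [deltaXZ_eq_neg_re_inner_div hW (W.neg_mem hz) hz, inner_neg_left, map_neg, neg_neg, norm_neg,
    inner_self_eq_norm_mul_norm]
  exact div_self (mul_self_ne_zero.mpr (norm_ne_zero_iff.mpr hz0))

lemma deltaAdmissible_neg_self (hz : z ∈ W) (hz0 : z ≠ 0) :
    deltaAdmissible 𝕜 (W : Set H) z (-z) := by
  have hW : W ≠ ⊥ := W.ne_bot_iff.mpr ⟨z, hz, hz0⟩
  refine ⟨W.neg_mem hz, neg_ne_zero.mpr hz0, Or.inr ?_⟩
  rw [sigmaNorm_add_sq_sub_eq hW (W.neg_mem hz) hz]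
  positivity

variable (𝕜) in
lemma isGreatest_deltaXZ (hz : z ∈ W) (hz0 : z ≠ 0) :
    IsGreatest {c : ℝ | ∃ x : H, deltaAdmissible 𝕜 (W : Set H) z x ∧
      c = deltaXZ 𝕜 (W : Set H) x z} 1 := by
  refine ⟨⟨-z, deltaAdmissible_neg_self hz hz0, (deltaXZ_neg_self hz hz0).symm⟩, ?_⟩
  rintro _ ⟨x, ⟨hx, -, -⟩, rfl⟩
  exact deltaXZ_le_one (W.ne_bot_iff.mpr ⟨z, hz, hz0⟩) hx hz

lemma deltaSigma_eq_one_of_descentSet_subset {f : H → ℝ≥0∞}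
    (hsubset : descentSet (W : Set H) f ⊆ W) (hne : ∃ z ∈ descentSet (W : Set H) f, z ≠ 0) :
    deltaSigma 𝕜 (W : Set H) f = 1 := by
  have hsup {z : H} (hz : z ∈ descentSet (W : Set H) f) (hz0 : z ≠ 0) :=
    (isGreatest_deltaXZ 𝕜 (hsubset hz) hz0).csSup_eq
  obtain ⟨w, hw, hw0⟩ := hne
  refine IsLeast.csInf_eq ⟨⟨w, hw, hw0, (hsup hw hw0).symm⟩, ?_⟩
  rintro _ ⟨z, hz, hz0, rfl⟩
  exact (hsup hz hz0).ge

end Delta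

theorem stmt14_general {𝕜 : Type*} [RCLike 𝕜] {H : Type*} [NormedAddCommGroup H]
    [InnerProductSpace 𝕜 H] [NormedSpace ℝ H] (W : Submodule ℝ H) (hW : W ≠ ⊥) :
    deltaSigma 𝕜 (W : Set H) (fun x => if x ∈ W then 0 else ⊤) = 1 := by
  have hdescent : descentSet (W : Set H) (fun x => if x ∈ W then 0 else ⊤) = W :=
    descentSet_ite_mem W.toAddSubgroup
  refine deltaSigma_eq_one_of_descentSet_subset hdescent.subset ?_
  rw [hdescent]
  exact W.exists_mem_ne_zero_of_ne_bot hW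

/-- for a nonzero linear subspace `Σ` of a real or complex Hilbert space and
`f = ι_Σ` its characteristic function, `δ_Σ(f) = 1`. -/
theorem stmt14 {𝕜 : Type*} [RCLike 𝕜] {H : Type*}
    [NormedAddCommGroup H] [InnerProductSpace 𝕜 H] [CompleteSpace H]
    [NormedSpace ℝ H] [IsScalarTower ℝ 𝕜 H]
    (W : Submodule 𝕜 H) (hW : W ≠ ⊥) :
    deltaSigma 𝕜 (W : Set H) (fun x => if x ∈ W then 0 else ⊤) = 1 :=
  stmt14_general (W.restrictScalars ℝ) (by rwa [Ne, Submodule.restrictScalars_eq_bot_iff])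
end
end
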